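/- Let bmp : ℕ be a bitmap and i : ℕ a bit index with testBit bmp i = true, and let bmp' = bmp ^^^ 2^i be the bitmap with the flag 2^i removed. Then: (1) popCount bmp' + 1 = popCount bmp; and (2) for every j ≠ i with testBit bmp j = true, pos(bmp', j) = pos(bmp, j) if j < i and pos(bmp', j) + 1 = pos(bmp, j) if j > i. Hence removing the array entry at position pos(bmp, i) and shifting later entries down by one yields an array consistent with the updated bitmap, preserving invariants INV2 and INV3. -/

import Mathlib

/-- The number of set bits (population count / bitcount) of a natural number. -/
def popCount (n : ℕ) : ℕ := n.bits.count true

/-- The Ctrie array position of the branch with flag `2^i` in a cnode with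
bitmap `bmp`: the number of set bits of `bmp` strictly below position `i`. -/
def pos (bmp i : ℕ) : ℕ := popCount (bmp &&& (2 ^ i - 1))

theorem popCount_bit (b : Bool) (n : ℕ) : popCount (Nat.bit b n) = b.toNat + popCount n := by
  by_cases hn : n = 0 → b = true
  · rw [popCount, Nat.bits_append_bit _ _ hn, popCount]
    cases b <;> simp [add_comm]
  · obtain ⟨rfl, hb⟩ := Classical.not_imp.mp hn
    simp_all [popCount]

theorem popCount_xor_two_pow (n i : ℕ) (h : n.testBit i = true) :
    popCount (n ^^^ 2 ^ i) + 1 = popCount n := by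
  induction i generalizing n with
  | zero =>
    cases n using Nat.bitCasesOn with
    | bit b m =>
      rw [Nat.testBit_bit_zero] at h
      subst h
      have hx : Nat.bit true m ^^^ 2 ^ 0 = Nat.bit false m := by
        simpa using Nat.xor_bit true m true 0
      rw [hx, popCount_bit, popCount_bit]
      simp [add_comm]
  | succ i ih =>
    cases n using Nat.bitCasesOn with
    | bit b m =>
      rw [Nat.testBit_bit_succ] at h
      have hx : Nat.bit b m ^^^ 2 ^ (i + 1) = Nat.bit b (m ^^^ 2 ^ i) := by
        have hp : 2 ^ (i + 1) = Nat.bit false (2 ^ i) := by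
          simp [Nat.bit_val, pow_succ, mul_comm]
        simpa [hp] using Nat.xor_bit b m false (2 ^ i)
      rw [hx, popCount_bit, popCount_bit, add_assoc, ih m h]

/-- Removing the flag `2^i` from a bitmap whose `i`-th bit is set: the
bitcount drops by one, and positions of the other set bits are unchanged
below `i` and shifted down by one above `i`. Hence removing the array entry
at position `pos(bmp, i)` and shifting later entries down by one yields an
array consistent with the updated bitmap, preserving INV2 and INV3. -/
theorem pos_remove_flag (bmp i : ℕ) (h : bmp.testBit i = true) :
    popCount (bmp ^^^ 2 ^ i) + 1 = popCount bmp ∧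
    (∀ j, j ≠ i → bmp.testBit j = true →
      (j < i → pos (bmp ^^^ 2 ^ i) j = pos bmp j) ∧
      (j > i → pos (bmp ^^^ 2 ^ i) j + 1 = pos bmp j)) := by
  refine ⟨popCount_xor_two_pow bmp i h, fun j _ _ => ⟨fun hji => ?_, fun hij => ?_⟩⟩
  · have hmask : (bmp ^^^ 2 ^ i) &&& (2 ^ j - 1) = bmp &&& (2 ^ j - 1) := by
      refine Nat.eq_of_testBit_eq fun k => ?_
      simp only [Nat.testBit_and, Nat.testBit_xor, Nat.testBit_two_pow,
        Nat.testBit_two_pow_sub_one]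
      grind
    rw [pos, hmask, pos]
  · have hmask : (bmp ^^^ 2 ^ i) &&& (2 ^ j - 1) = (bmp &&& (2 ^ j - 1)) ^^^ 2 ^ i := by
      refine Nat.eq_of_testBit_eq fun k => ?_
      simp only [Nat.testBit_and, Nat.testBit_xor, Nat.testBit_two_pow,
        Nat.testBit_two_pow_sub_one]
      grind
    rw [pos, hmask, pos]
    apply popCount_xor_two_pow
    simp [h, hij]
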